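/- Let -1 < α < -1/2 ≤ β, let K ∈ {0,1}, k ∈ {0,1,2}, W ≥ 1, s ≥ 0 and 1 ≤ p ≤ ∞ be fixed, and define Υ_s(t,θ,φ) := (sin(θ/2)+sin(φ/2))^{Kk} ∫∫_{[-1,1]²} (t² + q(θ,φ,u,v))^{-(α+β+3/2 + W/(2p) + Kk/2 + s/2)} dπ_α^K(u) dΠ_β(v) for t ∈ (0,1), θ, φ ∈ [0,π] (with the convention W/(2p) = 0 when p = ∞), where dπ_α^K := dΠ_{-1/2} if K = 0 and dπ_α^K := dΠ_{α+1} if K = 1. Then there exists a constant C (depending only on α, β, K, k, W, s, p) such that for all θ ≠ φ in [0,π]: ‖1 + Υ_s(·,θ,φ)‖_{L^p((0,1), t^{W−1}dt)} ≤ C |θ−φ|^{-s} / μ_{α,β}(B(θ,|θ−φ|)). -/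

import Mathlib

open MeasureTheory Real Set
open scoped ENNReal Classical

noncomputable def cab (α β : ℝ) : ℝ :=
  Real.Gamma (α + β + 2) / (2 ^ (α + β + 1) * Real.Gamma (α + 1) * Real.Gamma (β + 1))

noncomputable def F4 (a₁ a₂ b₁ b₂ x y : ℝ) : ℝ :=
  ∑' p : ℕ × ℕ,
    (Polynomial.eval a₁ (ascPochhammer ℝ (p.1 + p.2)) *
      Polynomial.eval a₂ (ascPochhammer ℝ (p.1 + p.2))) /
    (Polynomial.eval b₁ (ascPochhammer ℝ p.1) * Polynomial.eval b₂ (ascPochhammer ℝ p.2) *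
      (Nat.factorial p.1) * (Nat.factorial p.2)) * x ^ p.1 * y ^ p.2

noncomputable def Hker (α β t θ φ : ℝ) : ℝ :=
  cab α β * Real.sinh (t / 2) / Real.cosh (t / 2) ^ (α + β + 2) *
    F4 ((α + β + 2) / 2) ((α + β + 3) / 2) (α + 1) (β + 1)
      ((Real.sin (θ / 2) * Real.sin (φ / 2) / Real.cosh (t / 2)) ^ 2)
      ((Real.cos (θ / 2) * Real.cos (φ / 2) / Real.cosh (t / 2)) ^ 2)

noncomputable def qf (θ φ u v : ℝ) : ℝ :=
  1 - u * Real.sin (θ / 2) * Real.sin (φ / 2) - v * Real.cos (θ / 2) * Real.cos (φ / 2)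

noncomputable def Psi (α β t θ φ u v : ℝ) : ℝ :=
  cab α β * Real.sinh (t / 2) / (Real.cosh (t / 2) - 1 + qf θ φ u v) ^ (α + β + 2)

noncomputable def PsiE (α β t θ φ u v : ℝ) : ℝ :=
  (Psi α β t θ φ u v + Psi α β t θ φ (-u) v + Psi α β t θ φ u (-v) +
    Psi α β t θ φ (-u) (-v)) / 4

noncomputable def PiMeas (ν : ℝ) : Measure ℝ :=
  if ν = -(1/2) then (2⁻¹ : ℝ≥0∞) • (Measure.dirac (-1) + Measure.dirac 1)
  else (volume.restrict (Icc (-1 : ℝ) 1)).withDensity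
    (fun u => ENNReal.ofReal
      (Real.Gamma (ν + 1) / (Real.sqrt π * Real.Gamma (ν + 1/2)) * (1 - u ^ 2) ^ (ν - 1/2)))

noncomputable def PiFun (γ u : ℝ) : ℝ :=
  Real.Gamma (γ + 1) / (Real.sqrt π * Real.Gamma (γ + 1/2)) *
    ∫ w in (0 : ℝ)..u, (1 - w ^ 2) ^ (γ - 1/2)

noncomputable def PiInt (ν : ℝ) (S : Set ℝ) (f : ℝ → ℝ) : ℝ :=
  if ν = -(1/2) then
    ((if (-1 : ℝ) ∈ S then f (-1) else 0) + (if (1 : ℝ) ∈ S then f 1 else 0)) / 2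
  else ∫ u in S, f u *
    (Real.Gamma (ν + 1) / (Real.sqrt π * Real.Gamma (ν + 1/2)) * (1 - u ^ 2) ^ (ν - 1/2))

noncomputable def muab (α β : ℝ) : Measure ℝ :=
  (volume.restrict (Icc (0 : ℝ) π)).withDensity
    (fun θ => ENNReal.ofReal (Real.sin (θ / 2) ^ (2 * α + 1) * Real.cos (θ / 2) ^ (2 * β + 1)))

def ballI (θ r : ℝ) : Set ℝ := Ioo (θ - r) (θ + r) ∩ Icc 0 π

noncomputable def piAux (α : ℝ) (K : ℕ) : Measure ℝ :=
  if K = 0 then PiMeas (-(1/2)) else PiMeas (α + 1)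

/-!
Write `r = |θ - φ|`, `S = sin (θ/2) sin (φ/2)`, `C = cos (θ/2) cos (φ/2)`. The kernel `qf`
dominates `g + (1 - u) S + (1 - v) C` with `g ≍ r²`, so `t² + qf` dominates each of `t² + g`,
`g + (1 - u) S` and `g + (1 - v) C`. For a small `δ > 0` the exponent is split, with `w = W / p`, as
`(w + δ)/2 + s/2 + (α + 1 - δ + Kk/2) + (β + 1/2 + δ/2)`, giving these parts in order to `t² + g`,
`g`, `g + (1 - u) S` and `g + (1 - v) C`; the variables `t`, `u`, `v` then separate. For `γ > 0`,
`∫ (D + (1 - u) B)^(-(ν + 1/2 + γ)) dΠ_ν(u) ≲ D^(-γ) (D + B)^(-(ν + 1/2))`, and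
`g + S ≍ (θ + r)²`, `g + C ≍ (π - θ + r)²`, so the `u`- and `v`-integrals produce the powers
`(θ + r)^(-(2α + 1))` and `(π - θ + r)^(-(2β + 1))` of `1 / μ_{α,β}(B(θ, r))`. When `K = 1` the
factor `(sin (θ/2) + sin (φ/2))^k ≲ (g + S)^(k/2)` compensates the passage from `Π_α` to `Π_{α+1}`;
when `K = 0` the same bound holds for `Π_{-1/2}` because `-(α + 1/2) ≥ 0`. Finally the `L^p` norm
of `(t + r)^(-(w + δ))` is `≲ r^(-δ)`, and the constant `1` is absorbed since
`μ_{α,β}(B(θ, r)) ≲ r^(2α + 2) ≲ r^δ`.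
-/

/-- Two-sided comparability `x ≍ y` of nonnegative reals with constant `c`; zero values are
allowed, so `c` is not automatically at least `1`. -/
structure IsComparable (c x y : ℝ) : Prop where
  nonneg_left : 0 ≤ x
  nonneg_right : 0 ≤ y
  left_le : x ≤ c * y
  right_le : y ≤ c * x

lemma IsComparable.rpow_le {c x y : ℝ} (h : IsComparable c x y) (hc : 1 ≤ c) (e : ℝ) :
    x ^ e ≤ c ^ |e| * y ^ e := by
  obtain ⟨hx, hy, hxy, hyx⟩ := h
  have hc₀ : 0 < c := by linarith
  rcases le_or_gt 0 e with he | he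
  · rw [abs_of_nonneg he, ← mul_rpow hc₀.le hy]
    exact rpow_le_rpow hx hxy he
  rcases hy.eq_or_lt with rfl | hy₀
  · obtain rfl : x = 0 := le_antisymm (by simpa only [mul_zero] using hxy) hx
    exact le_mul_of_one_le_left (by positivity) (one_le_rpow hc (abs_nonneg e))
  · rw [abs_of_neg he, rpow_neg hc₀.le, ← inv_rpow hc₀.le, ← mul_rpow (by positivity) hy]
    exact rpow_le_rpow_of_nonpos (by positivity) ((inv_mul_le_iff₀ hc₀).2 hyx) he.le

lemma IsComparable.rpow_le_of_sq {c x y : ℝ} (h : IsComparable c x (y ^ 2)) (hc : 1 ≤ c)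
    (hy : 0 ≤ y) (e : ℝ) : x ^ e ≤ c ^ |e| * y ^ (2 * e) := by
  rw [rpow_mul hy, rpow_two]
  exact h.rpow_le hc e

lemma pow_mul_rpow_le {c x y e : ℝ} {k : ℕ} (hx : 0 ≤ x) (hy : 0 < y) (hk : k ≤ 2)
    (hxc : x ^ 2 ≤ c) (hyc : y ≤ c) :
    x ^ k * y ^ (-(e + (k : ℝ) / 2)) ≤ c * y ^ (-(e + 1)) := by
  have hk₁ : (k : ℝ) / 2 ≤ 1 := by
    have : (k : ℝ) ≤ 2 := by exact_mod_cast hk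
    linarith
  have hratio : x ^ k / y ^ ((k : ℝ) / 2) ≤ c / y :=
    calc x ^ k / y ^ ((k : ℝ) / 2) = (x ^ 2 / y) ^ ((k : ℝ) / 2) := by
          rw [div_rpow (sq_nonneg x) hy.le, ← rpow_two, ← rpow_mul hx,
            mul_div_cancel₀ _ two_ne_zero, rpow_natCast]
      _ ≤ (c / y) ^ ((k : ℝ) / 2) := by gcongr
      _ ≤ c / y := rpow_le_self_of_one_le ((one_le_div hy).2 hyc) hk₁
  calc x ^ k * y ^ (-(e + (k : ℝ) / 2)) = x ^ k / y ^ ((k : ℝ) / 2) * y ^ (-e) := by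
        rw [neg_add, rpow_add hy, rpow_neg hy.le ((k : ℝ) / 2)]
        ring
    _ ≤ c / y * y ^ (-e) := by gcongr
    _ = c * y ^ (-(e + 1)) := by
        rw [neg_add, rpow_add hy, rpow_neg_one]
        ring

section Integrals

variable {a b γ D B : ℝ}

lemma lintegral_Ioc_add_rpow_mul_rpow_le (ha : 0 < a) (hγ : 0 < γ) (hD : 0 < D) :
    ∫⁻ w in Ioc 0 D, ENNReal.ofReal ((D + w) ^ (-(a + γ)) * w ^ (a - 1)) ≤
      ENNReal.ofReal (1 / a * D ^ (-γ)) := by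
  have hint : IntegrableOn (fun w : ℝ => D ^ (-(a + γ)) * w ^ (a - 1)) (Ioc 0 D) :=
    ((intervalIntegral.intervalIntegrable_rpow' (by linarith)).const_mul _).1
  calc ∫⁻ w in Ioc 0 D, ENNReal.ofReal ((D + w) ^ (-(a + γ)) * w ^ (a - 1))
      ≤ ∫⁻ w in Ioc 0 D, ENNReal.ofReal (D ^ (-(a + γ)) * w ^ (a - 1)) := by
        refine setLIntegral_mono' measurableSet_Ioc fun w hw => ENNReal.ofReal_le_ofReal ?_
        refine mul_le_mul_of_nonneg_right ?_ (rpow_nonneg hw.1.le _)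
        exact rpow_le_rpow_of_nonpos hD (by linarith [hw.1]) (by linarith)
    _ = ENNReal.ofReal (∫ w in Ioc 0 D, D ^ (-(a + γ)) * w ^ (a - 1)) :=
        (ofReal_integral_eq_lintegral_ofReal hint <|
          ae_restrict_of_forall_mem measurableSet_Ioc fun w hw =>
            mul_nonneg (rpow_nonneg hD.le _) (rpow_nonneg hw.1.le _)).symm
    _ = ENNReal.ofReal (1 / a * D ^ (-γ)) := by
        rw [← intervalIntegral.integral_of_le hD.le, intervalIntegral.integral_const_mul,
          integral_rpow (Or.inl (by linarith)), sub_add_cancel, zero_rpow ha.ne', sub_zero,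
          mul_div_assoc', ← rpow_add hD, show -(a + γ) + a = -γ by ring, one_div_mul_eq_div]

lemma lintegral_Ioi_add_rpow_mul_rpow_le (ha : 0 < a) (hγ : 0 < γ) (hD : 0 < D) :
    ∫⁻ w in Ioi D, ENNReal.ofReal ((D + w) ^ (-(a + γ)) * w ^ (a - 1)) ≤
      ENNReal.ofReal (1 / γ * D ^ (-γ)) := by
  have hlt : -γ - 1 < -1 := by linarith
  calc ∫⁻ w in Ioi D, ENNReal.ofReal ((D + w) ^ (-(a + γ)) * w ^ (a - 1))
      ≤ ∫⁻ w in Ioi D, ENNReal.ofReal (w ^ (-γ - 1)) := by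
        refine setLIntegral_mono' measurableSet_Ioi fun w hw => ENNReal.ofReal_le_ofReal ?_
        have hw₀ : 0 < w := hD.trans hw
        calc (D + w) ^ (-(a + γ)) * w ^ (a - 1) ≤ w ^ (-(a + γ)) * w ^ (a - 1) := by
              refine mul_le_mul_of_nonneg_right ?_ (rpow_nonneg hw₀.le _)
              exact rpow_le_rpow_of_nonpos hw₀ (by linarith) (by linarith)
          _ = w ^ (-γ - 1) := by rw [← rpow_add hw₀]; congr 1; ring
    _ = ENNReal.ofReal (∫ w in Ioi D, w ^ (-γ - 1)) :=
        (ofReal_integral_eq_lintegral_ofReal (integrableOn_Ioi_rpow_of_lt hlt hD) <|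
          ae_restrict_of_forall_mem measurableSet_Ioi fun w hw =>
            rpow_nonneg (hD.trans hw).le _).symm
    _ = ENNReal.ofReal (1 / γ * D ^ (-γ)) := by
        rw [integral_Ioi_rpow_of_lt hlt hD, sub_add_cancel, neg_div_neg_eq, one_div_mul_eq_div]

lemma lintegral_Ioi_zero_add_rpow_mul_rpow_le (ha : 0 < a) (hγ : 0 < γ) (hD : 0 < D) :
    ∫⁻ w in Ioi 0, ENNReal.ofReal ((D + w) ^ (-(a + γ)) * w ^ (a - 1)) ≤
      ENNReal.ofReal ((1 / a + 1 / γ) * D ^ (-γ)) := by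
  rw [← Ioc_union_Ioi_eq_Ioi hD.le, add_mul, ENNReal.ofReal_add (by positivity) (by positivity)]
  exact (lintegral_union_le _ _ _).trans (add_le_add
    (lintegral_Ioc_add_rpow_mul_rpow_le ha hγ hD) (lintegral_Ioi_add_rpow_mul_rpow_le ha hγ hD))

lemma lintegral_Icc_add_mul_rpow_mul_rpow_le (ha : 0 < a) (hγ : 0 < γ) (hD : 0 < D)
    (hB : 0 ≤ B) :
    ∫⁻ w in Icc 0 1, ENNReal.ofReal ((D + w * B) ^ (-(a + γ)) * w ^ (a - 1)) ≤
      ENNReal.ofReal (2 ^ (a + γ) * (1 / a + 1 / γ) * (D ^ (-γ) * (D + B) ^ (-a))) := by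
  have hDB : 0 < D + B := by linarith
  -- On `[0, 1]` the base `D + w * B` is at least half of `(D + B) * (D / (D + B) + w)`.
  calc ∫⁻ w in Icc 0 1, ENNReal.ofReal ((D + w * B) ^ (-(a + γ)) * w ^ (a - 1))
      = ∫⁻ w in Ioc 0 1, ENNReal.ofReal ((D + w * B) ^ (-(a + γ)) * w ^ (a - 1)) :=
        setLIntegral_congr Ioc_ae_eq_Icc.symm
    _ ≤ ∫⁻ w in Ioc 0 1, ENNReal.ofReal (((D + B) / 2) ^ (-(a + γ))) *
          ENNReal.ofReal ((D / (D + B) + w) ^ (-(a + γ)) * w ^ (a - 1)) := by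
        refine setLIntegral_mono' measurableSet_Ioc fun w hw => ?_
        have hw₀ : 0 < w := hw.1
        rw [← ENNReal.ofReal_mul (by positivity), ← mul_assoc,
          ← mul_rpow (by positivity) (by positivity)]
        refine ENNReal.ofReal_le_ofReal (mul_le_mul_of_nonneg_right ?_ (by positivity))
        refine rpow_le_rpow_of_nonpos (by positivity) ?_ (by linarith)
        calc (D + B) / 2 * (D / (D + B) + w) = (D + D * w + w * B) / 2 := by field_simp; ring
          _ ≤ D + w * B := by nlinarith [mul_nonneg hw₀.le hB, hw.2]
    _ ≤ ENNReal.ofReal (((D + B) / 2) ^ (-(a + γ))) *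
          ENNReal.ofReal ((1 / a + 1 / γ) * (D / (D + B)) ^ (-γ)) := by
        rw [lintegral_const_mul' _ _ ENNReal.ofReal_ne_top]
        gcongr
        exact (lintegral_mono_set Ioc_subset_Ioi_self).trans
          (lintegral_Ioi_zero_add_rpow_mul_rpow_le ha hγ (by positivity))
    _ = ENNReal.ofReal (2 ^ (a + γ) * (1 / a + 1 / γ) * (D ^ (-γ) * (D + B) ^ (-a))) := by
        rw [← ENNReal.ofReal_mul (by positivity), div_rpow hDB.le zero_le_two,
          div_rpow hD.le hDB.le, rpow_neg zero_le_two, neg_add, rpow_add hDB]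
        congr 1
        field_simp

lemma lintegral_Icc_rpow_le {m y : ℝ} (hb : -1 < b) (hb₀ : b ≤ 0) (hm : 0 ≤ m) (hmy : m ≤ y) :
    ∫⁻ x in Icc m y, ENNReal.ofReal (x ^ b) ≤ ENNReal.ofReal ((y - m) * y ^ b / (b + 1)) := by
  have hb₁ : 0 < b + 1 := by linarith
  have hmul_rpow : ∀ x : ℝ, 0 ≤ x → x ^ (b + 1) = x * x ^ b := fun x hx => by
    rw [rpow_add' hx hb₁.ne', rpow_one, mul_comm]
  have hm_le : m * y ^ b ≤ m * m ^ b := by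
    rcases hm.eq_or_lt with rfl | hm₀
    · simp only [zero_mul, le_refl]
    · exact mul_le_mul_of_nonneg_left (rpow_le_rpow_of_nonpos hm₀ hmy hb₀) hm
  rw [setLIntegral_congr Ioc_ae_eq_Icc.symm, ← ofReal_integral_eq_lintegral_ofReal
    (intervalIntegral.intervalIntegrable_rpow' hb).1
    (ae_restrict_of_forall_mem measurableSet_Ioc fun x hx => rpow_nonneg (hm.trans hx.1.le) _),
    ← intervalIntegral.integral_of_le hmy, integral_rpow (Or.inl hb),
    hmul_rpow y (hm.trans hmy), hmul_rpow m hm]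
  gcongr
  linarith

end Integrals

lemma lintegral_Icc_neg_le_two_mul {f : ℝ → ℝ≥0∞} {a : ℝ} (hf : ∀ x ∈ Icc 0 a, f (-x) ≤ f x) :
    ∫⁻ x in Icc (-a) a, f x ≤ 2 * ∫⁻ x in Icc 0 a, f x := by
  have hneg : ∫⁻ x in Icc (-a) 0, f x ≤ ∫⁻ x in Icc 0 a, f x := by
    rw [← (Measure.measurePreserving_neg volume).setLIntegral_comp_preimage_emb
      (MeasurableEquiv.neg ℝ).measurableEmbedding f, Set.neg_preimage, Set.neg_Icc, neg_zero,
      neg_neg]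
    exact setLIntegral_mono' measurableSet_Icc hf
  calc ∫⁻ x in Icc (-a) a, f x ≤ ∫⁻ x in Icc (-a) 0 ∪ Icc 0 a, f x :=
        lintegral_mono_set Icc_subset_Icc_union_Icc
    _ ≤ 2 * ∫⁻ x in Icc 0 a, f x := by
        rw [two_mul]
        exact (lintegral_union_le _ _ _).trans (add_le_add_left hneg _)

lemma ae_mem_Icc_PiMeas (ν : ℝ) : ∀ᵐ u ∂PiMeas ν, u ∈ Icc (-1 : ℝ) 1 := by
  unfold PiMeas
  split_ifs
  · refine Measure.ae_smul_measure ?_ _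
    simp [ae_add_measure_iff]
  · exact (withDensity_absolutelyContinuous _ _).ae_le (ae_restrict_mem measurableSet_Icc)

instance isProbabilityMeasure_PiMeas_neg_half : IsProbabilityMeasure (PiMeas (-(1 / 2))) := by
  refine ⟨?_⟩
  simp only [PiMeas, if_true, Measure.smul_apply, Measure.add_apply, measure_univ, smul_eq_mul]
  rw [one_add_one_eq_two, ENNReal.inv_mul_cancel two_ne_zero ENNReal.ofNat_ne_top]

lemma exists_lintegral_PiMeas_le_of_monotoneOn {ν : ℝ} (hν : -(1 / 2) < ν) :
    ∃ C : ℝ, 0 < C ∧ ∀ f : ℝ → ℝ≥0∞, MonotoneOn f (Icc (-1) 1) →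
      ∫⁻ u, f u ∂PiMeas ν ≤
        ENNReal.ofReal C * ∫⁻ w in Icc 0 1, f (1 - w) * ENNReal.ofReal (w ^ (ν - 1 / 2)) := by
  set κ := Gamma (ν + 1) / (√π * Gamma (ν + 1 / 2))
  have hκ : 0 < κ := by
    have := Gamma_pos_of_pos (show 0 < ν + 1 / 2 by linarith)
    have := Gamma_pos_of_pos (show 0 < ν + 1 by linarith)
    positivity
  refine ⟨2 * (κ * 2 ^ |ν - 1 / 2|), by positivity, fun f hf => ?_⟩
  set g : ℝ → ℝ≥0∞ := fun u => ENNReal.ofReal (κ * (1 - u ^ 2) ^ (ν - 1 / 2)) * f u with hg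
  have hg_neg : ∀ u ∈ Icc (0 : ℝ) 1, g (-u) ≤ g u := fun u ⟨hu₀, hu₁⟩ => by
    simp only [hg, neg_sq]
    gcongr
    exact hf ⟨by linarith, by linarith⟩ ⟨by linarith, hu₁⟩ (by linarith)
  have hg_le : ∀ w ∈ Icc (0 : ℝ) 1, g (1 - w) ≤ ENNReal.ofReal (κ * 2 ^ |ν - 1 / 2|) *
      (f (1 - w) * ENNReal.ofReal (w ^ (ν - 1 / 2))) := fun w ⟨hw₀, hw₁⟩ => by
    simp only [hg]
    rw [mul_comm (f (1 - w)), ← mul_assoc, ← ENNReal.ofReal_mul (by positivity), mul_assoc]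
    gcongr
    exact IsComparable.rpow_le (c := 2) ⟨by nlinarith, hw₀, by nlinarith, by nlinarith⟩ one_le_two _
  calc ∫⁻ u, f u ∂PiMeas ν ≤ ∫⁻ u in Icc (-1) 1, g u := by
        rw [PiMeas, if_neg hν.ne']
        exact lintegral_withDensity_le_lintegral_mul _ (by fun_prop) _
    _ ≤ 2 * ∫⁻ u in Icc 0 1, g u := lintegral_Icc_neg_le_two_mul hg_neg
    _ = 2 * ∫⁻ w in Icc 0 1, g (1 - w) := by
        rw [← (Measure.measurePreserving_sub_left volume (1 : ℝ)).setLIntegral_comp_preimage_emb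
          (MeasurableEquiv.subLeft (1 : ℝ)).measurableEmbedding g, preimage_const_sub_Icc,
          sub_self, sub_zero]
    _ ≤ 2 * ∫⁻ w in Icc 0 1, ENNReal.ofReal (κ * 2 ^ |ν - 1 / 2|) *
          (f (1 - w) * ENNReal.ofReal (w ^ (ν - 1 / 2))) := by
        gcongr 2 * ?_
        exact setLIntegral_mono' measurableSet_Icc hg_le
    _ = _ := by
        rw [lintegral_const_mul' _ _ ENNReal.ofReal_ne_top, ← mul_assoc,
          ENNReal.ofReal_mul zero_le_two, ENNReal.ofReal_ofNat]

lemma lintegral_PiMeas_neg_half_rpow_le {γ D B : ℝ} (hγ : 0 ≤ γ) (hD : 0 < D) (hB : 0 ≤ B) :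
    ∫⁻ u, ENNReal.ofReal ((D + (1 - u) * B) ^ (-γ)) ∂PiMeas (-(1 / 2)) ≤
      ENNReal.ofReal (D ^ (-γ)) := by
  refine lintegral_le_const ?_
  filter_upwards [ae_mem_Icc_PiMeas _] with u hu
  have := mul_nonneg (sub_nonneg.2 hu.2) hB
  exact ENNReal.ofReal_le_ofReal (rpow_le_rpow_of_nonpos hD (by linarith) (by linarith))

lemma exists_lintegral_PiMeas_rpow_le {ν γ : ℝ} (hν : -(1 / 2) ≤ ν) (hγ : 0 < γ) :
    ∃ C : ℝ, 0 < C ∧ ∀ D B : ℝ, 0 < D → 0 ≤ B →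
      ∫⁻ u, ENNReal.ofReal ((D + (1 - u) * B) ^ (-(ν + 1 / 2 + γ))) ∂PiMeas ν ≤
        ENNReal.ofReal (C * (D ^ (-γ) * (D + B) ^ (-(ν + 1 / 2)))) := by
  rcases hν.eq_or_lt with rfl | hν
  · refine ⟨1, one_pos, fun D B hD hB => ?_⟩
    rw [neg_add_cancel, neg_zero, rpow_zero, zero_add, mul_one, one_mul]
    exact lintegral_PiMeas_neg_half_rpow_le hγ.le hD hB
  · obtain ⟨C, hC, hle⟩ := exists_lintegral_PiMeas_le_of_monotoneOn hν
    have hν₀ : 0 < ν + 1 / 2 := by linarith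
    refine ⟨C * (2 ^ (ν + 1 / 2 + γ) * (1 / (ν + 1 / 2) + 1 / γ)), by positivity,
      fun D B hD hB => ?_⟩
    have hmono : MonotoneOn
        (fun u => ENNReal.ofReal ((D + (1 - u) * B) ^ (-(ν + 1 / 2 + γ)))) (Icc (-1) 1) := by
      intro u _ v hv huv
      have := mul_nonneg (sub_nonneg.2 hv.2) hB
      refine ENNReal.ofReal_le_ofReal (rpow_le_rpow_of_nonpos (by linarith) ?_ (by linarith))
      gcongr
    refine (hle _ hmono).trans ?_
    rw [mul_assoc, ENNReal.ofReal_mul hC.le]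
    gcongr
    refine le_of_eq_of_le (setLIntegral_congr_fun measurableSet_Icc fun w hw => ?_)
      (lintegral_Icc_add_mul_rpow_mul_rpow_le hν₀ hγ hD hB)
    rw [sub_sub_cancel, ← ENNReal.ofReal_mul' (rpow_nonneg hw.1 _),
      show ν - 1 / 2 = ν + 1 / 2 - 1 by ring]

lemma ae_mem_Icc_piAux (α : ℝ) (K : ℕ) : ∀ᵐ u ∂piAux α K, u ∈ Icc (-1 : ℝ) 1 := by
  unfold piAux
  split_ifs <;> exact ae_mem_Icc_PiMeas _

lemma exists_pow_mul_lintegral_PiMeas_add_one_le {α δ c : ℝ} (hα : -(3 / 2) ≤ α)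
    (hδ : δ < 1 / 2) (hc : 2 ≤ c) {k : ℕ} (hk : k ≤ 2) :
    ∃ C : ℝ, 0 < C ∧ ∀ S D B : ℝ, 0 ≤ S → 0 < D → 0 ≤ B → S ^ 2 ≤ c * (D + B) →
      ENNReal.ofReal (S ^ k) * ∫⁻ u, ENNReal.ofReal
          ((D + (1 - u) * B) ^ (-(α + 1 - δ + (k : ℝ) / 2))) ∂PiMeas (α + 1) ≤
        ENNReal.ofReal (C * (D ^ (-(1 / 2 - δ)) * (D + B) ^ (-(α + 1 / 2)))) := by
  obtain ⟨C, hC, hint⟩ :=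
    exists_lintegral_PiMeas_rpow_le (ν := α + 1) (γ := 1 / 2 - δ) (by linarith) (by linarith)
  refine ⟨c * C, by positivity, fun S D B hS hD hB hSc => ?_⟩
  have hDB : 0 < D + B := by linarith
  calc ENNReal.ofReal (S ^ k) * ∫⁻ u, ENNReal.ofReal
          ((D + (1 - u) * B) ^ (-(α + 1 - δ + (k : ℝ) / 2))) ∂PiMeas (α + 1)
      ≤ ENNReal.ofReal (c * (D + B)) * ∫⁻ u, ENNReal.ofReal
          ((D + (1 - u) * B) ^ (-(α + 1 + 1 / 2 + (1 / 2 - δ)))) ∂PiMeas (α + 1) := by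
        rw [← lintegral_const_mul' _ _ ENNReal.ofReal_ne_top,
          ← lintegral_const_mul' _ _ ENNReal.ofReal_ne_top]
        refine lintegral_mono_ae ?_
        filter_upwards [ae_mem_Icc_PiMeas (α + 1)] with u ⟨hu, hu'⟩
        have hDu : 0 < D + (1 - u) * B := by nlinarith
        have hDu_le : D + (1 - u) * B ≤ c * (D + B) := by nlinarith
        rw [← ENNReal.ofReal_mul (by positivity), ← ENNReal.ofReal_mul (by positivity),
          show α + 1 + 1 / 2 + (1 / 2 - δ) = α + 1 - δ + 1 by ring]
        exact ENNReal.ofReal_le_ofReal (pow_mul_rpow_le hS hDu hk hSc hDu_le)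
    _ ≤ ENNReal.ofReal (c * (D + B)) * ENNReal.ofReal
          (C * (D ^ (-(1 / 2 - δ)) * (D + B) ^ (-(α + 1 + 1 / 2)))) := by
        gcongr
        exact hint D B hD hB
    _ = ENNReal.ofReal (c * C * (D ^ (-(1 / 2 - δ)) * (D + B) ^ (-(α + 1 / 2)))) := by
        rw [← ENNReal.ofReal_mul (by positivity),
          show -(α + 1 / 2) = 1 + -(α + 1 + 1 / 2) by ring, rpow_add hDB, rpow_one]
        ring_nf

lemma exists_pow_mul_lintegral_piAux_le {α δ c : ℝ} (hα : α ≤ -(1 / 2)) (hδ : 0 < δ)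
    (hδα : δ < α + 1) (hc : 2 ≤ c) {K k : ℕ} (hK : K ≤ 1) (hk : k ≤ 2) :
    ∃ C : ℝ, 0 < C ∧ ∀ S D B : ℝ, 0 ≤ S → 0 < D → 0 ≤ B → S ^ 2 ≤ c * (D + B) →
      ENNReal.ofReal (S ^ (K * k)) * ∫⁻ u, ENNReal.ofReal
          ((D + (1 - u) * B) ^ (-(α + 1 - δ + (K * k : ℕ) / 2))) ∂piAux α K ≤
        ENNReal.ofReal (C * (D ^ (-(1 / 2 - δ)) * (D + B) ^ (-(α + 1 / 2)))) := by
  interval_cases K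
  · refine ⟨1, one_pos, fun S D B _ hD hB _ => ?_⟩
    simp only [zero_mul, pow_zero, ENNReal.ofReal_one, one_mul, piAux, if_true, Nat.cast_zero,
      zero_div, add_zero]
    refine (lintegral_PiMeas_neg_half_rpow_le (by linarith) hD hB).trans
      (ENNReal.ofReal_le_ofReal ?_)
    calc D ^ (-(α + 1 - δ)) = D ^ (-(1 / 2 - δ)) * D ^ (-(α + 1 / 2)) := by
          rw [← rpow_add hD]; congr 1; ring
      _ ≤ D ^ (-(1 / 2 - δ)) * (D + B) ^ (-(α + 1 / 2)) := by
          gcongr <;> linarith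
  · simpa only [one_mul, piAux, one_ne_zero, if_false] using
      exists_pow_mul_lintegral_PiMeas_add_one_le (by linarith) (by linarith) hc hk

/-! ### The kernel `qf` -/

lemma sin_half_nonneg {x : ℝ} (hx : x ∈ Icc 0 π) : 0 ≤ sin (x / 2) :=
  sin_nonneg_of_nonneg_of_le_pi (by linarith [hx.1]) (by linarith [hx.1, hx.2])

lemma cos_half_nonneg {x : ℝ} (hx : x ∈ Icc 0 π) : 0 ≤ cos (x / 2) :=
  cos_nonneg_of_mem_Icc ⟨by linarith [hx.1, pi_pos], by linarith [hx.2]⟩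

lemma sin_half_le {x : ℝ} (hx : 0 ≤ x) : sin (x / 2) ≤ x / 2 := sin_le (by linarith)

lemma le_pi_mul_sin_half {x : ℝ} (hx : x ∈ Icc 0 π) : x ≤ π * sin (x / 2) := by
  calc x = π * (2 / π * (x / 2)) := by field_simp
    _ ≤ π * sin (x / 2) := by
      gcongr
      exact mul_le_sin (by linarith [hx.1]) (by linarith [hx.2])

lemma pi_sub_mem_Icc {x : ℝ} (hx : x ∈ Icc 0 π) : π - x ∈ Icc 0 π :=
  ⟨sub_nonneg.2 hx.2, sub_le_self π hx.1⟩

lemma sin_half_pi_sub (x : ℝ) : sin ((π - x) / 2) = cos (x / 2) := by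
  rw [sub_div, sin_pi_div_two_sub]

lemma abs_sub_le_pi {θ φ : ℝ} (hθ : θ ∈ Icc 0 π) (hφ : φ ∈ Icc 0 π) : |θ - φ| ≤ π :=
  abs_sub_le_of_nonneg_of_le hθ.1 hθ.2 hφ.1 hφ.2

/-- The quadratic lower bound for `qf θ φ 1 1 = 1 - cos ((θ - φ) / 2)`. -/
noncomputable def gap (θ φ : ℝ) : ℝ := (θ - φ) ^ 2 / (2 * π ^ 2)

lemma gap_pos {θ φ : ℝ} (hne : θ ≠ φ) : 0 < gap θ φ := by
  unfold gap
  positivity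

lemma le_qf {θ φ : ℝ} (hθ : θ ∈ Icc 0 π) (hφ : φ ∈ Icc 0 π) (u v : ℝ) :
    gap θ φ + (1 - u) * (sin (θ / 2) * sin (φ / 2)) + (1 - v) * (cos (θ / 2) * cos (φ / 2)) ≤
      qf θ φ u v := by
  have hcos : cos ((θ - φ) / 2) ≤ 1 - gap θ φ :=
    calc cos ((θ - φ) / 2) ≤ 1 - 2 / π ^ 2 * ((θ - φ) / 2) ^ 2 := by
          refine cos_le_one_sub_mul_cos_sq ?_
          rw [abs_div, abs_two]
          linarith [abs_sub_le_pi hθ hφ, pi_pos]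
      _ = 1 - gap θ φ := by unfold gap; field_simp
  rw [sub_div, cos_sub] at hcos
  unfold qf
  linarith

section Comparability

variable {θ φ : ℝ}

lemma sq_abs_sub_eq_mul_gap (θ φ : ℝ) : |θ - φ| ^ 2 = 2 * π ^ 2 * gap θ φ := by
  rw [sq_abs, gap]
  field_simp

lemma nine_le_pi_sq : 9 ≤ π ^ 2 := by nlinarith [pi_gt_three]

lemma isComparable_gap (θ φ : ℝ) : IsComparable (10 * π ^ 2) (gap θ φ) (|θ - φ| ^ 2) := by
  have hgap : 0 ≤ gap θ φ := by unfold gap; positivity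
  have := sq_abs_sub_eq_mul_gap θ φ
  refine ⟨hgap, sq_nonneg _, ?_, ?_⟩ <;> nlinarith [nine_le_pi_sq]

lemma isComparable_sq_add_gap {t : ℝ} (ht : 0 ≤ t) (θ φ : ℝ) :
    IsComparable (10 * π ^ 2) (t ^ 2 + gap θ φ) ((t + |θ - φ|) ^ 2) := by
  obtain ⟨hgap, -, hle, hge⟩ := isComparable_gap θ φ
  have := sq_abs_sub_eq_mul_gap θ φ
  have := nine_le_pi_sq
  have := mul_nonneg ht (abs_nonneg (θ - φ))
  refine ⟨by positivity, sq_nonneg _, ?_, ?_⟩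
  · nlinarith
  · nlinarith [sq_nonneg (t - |θ - φ|)]

lemma isComparable_gap_add_sin_mul_sin (hθ : θ ∈ Icc 0 π) (hφ : φ ∈ Icc 0 π) :
    IsComparable (10 * π ^ 2) (gap θ φ + sin (θ / 2) * sin (φ / 2)) ((θ + |θ - φ|) ^ 2) := by
  obtain ⟨hgap, -, -, -⟩ := isComparable_gap θ φ
  have hr : |θ - φ| ^ 2 = 2 * π ^ 2 * gap θ φ := sq_abs_sub_eq_mul_gap θ φ
  have hr' : |θ - φ| ^ 2 = (θ - φ) ^ 2 := sq_abs _
  have hsin : 0 ≤ sin (θ / 2) * sin (φ / 2) := mul_nonneg (sin_half_nonneg hθ) (sin_half_nonneg hφ)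
  have hsin_le : sin (θ / 2) * sin (φ / 2) ≤ θ / 2 * (φ / 2) :=
    mul_le_mul (sin_half_le hθ.1) (sin_half_le hφ.1) (sin_half_nonneg hφ) (by linarith [hθ.1])
  have hle_sin : θ * φ ≤ π ^ 2 * (sin (θ / 2) * sin (φ / 2)) :=
    calc θ * φ ≤ π * sin (θ / 2) * (π * sin (φ / 2)) :=
          mul_le_mul (le_pi_mul_sin_half hθ) (le_pi_mul_sin_half hφ) hφ.1
            (mul_nonneg pi_pos.le (sin_half_nonneg hθ))
      _ = π ^ 2 * (sin (θ / 2) * sin (φ / 2)) := by ring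
  have hθr : 0 ≤ θ * |θ - φ| := mul_nonneg hθ.1 (abs_nonneg _)
  have hφ_le : φ ≤ θ + |θ - φ| := by linarith [neg_abs_le (θ - φ)]
  refine ⟨by positivity, sq_nonneg _, ?_, ?_⟩
  · calc gap θ φ + sin (θ / 2) * sin (φ / 2) ≤ (θ + |θ - φ|) ^ 2 := by
          nlinarith [nine_le_pi_sq, mul_le_mul_of_nonneg_left hφ_le hθ.1]
      _ ≤ 10 * π ^ 2 * (θ + |θ - φ|) ^ 2 :=
          le_mul_of_one_le_left (sq_nonneg _) (by linarith [nine_le_pi_sq])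
  · calc (θ + |θ - φ|) ^ 2 ≤ 5 * (θ - φ) ^ 2 + 10 * (θ * φ) := by
          nlinarith [sq_nonneg (θ - |θ - φ|), sq_nonneg θ, sq_nonneg φ]
      _ ≤ 10 * π ^ 2 * (gap θ φ + sin (θ / 2) * sin (φ / 2)) := by linarith

lemma isComparable_gap_add_cos_mul_cos (hθ : θ ∈ Icc 0 π) (hφ : φ ∈ Icc 0 π) :
    IsComparable (10 * π ^ 2) (gap θ φ + cos (θ / 2) * cos (φ / 2))
      ((π - θ + |θ - φ|) ^ 2) := by
  have h := isComparable_gap_add_sin_mul_sin (pi_sub_mem_Icc hθ) (pi_sub_mem_Icc hφ)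
  have hgap : gap (π - θ) (π - φ) = gap θ φ := by unfold gap; ring
  have habs : |π - θ - (π - φ)| = |θ - φ| := by rw [sub_sub_sub_cancel_left, abs_sub_comm]
  rwa [hgap, habs, sin_half_pi_sub, sin_half_pi_sub] at h

end Comparability

/-! ### The measure of balls -/

lemma muab_apply (α β : ℝ) {s : Set ℝ} (hs : MeasurableSet s) :
    muab α β s = ∫⁻ x in s ∩ Icc 0 π,
      ENNReal.ofReal (sin (x / 2) ^ (2 * α + 1) * cos (x / 2) ^ (2 * β + 1)) := by
  rw [muab, withDensity_apply _ hs, Measure.restrict_restrict hs]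

lemma measurableSet_ballI (θ r : ℝ) : MeasurableSet (ballI θ r) :=
  measurableSet_Ioo.inter measurableSet_Icc

/-- The model `r (θ + r)^(2α+1) (π - θ + r)^(2β+1)` for the measure `muab α β (ballI θ r)` of a
ball centred at `θ`. -/
noncomputable def ballSize (α β θ r : ℝ) : ℝ :=
  r * (θ + r) ^ (2 * α + 1) * (π - θ + r) ^ (2 * β + 1)

lemma ballSize_pos (α β : ℝ) {θ r : ℝ} (hθ : θ ∈ Icc 0 π) (hr : 0 < r) : 0 < ballSize α β θ r := by
  have : 0 < θ + r := by linarith [hθ.1]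
  have : 0 < π - θ + r := by linarith [hθ.2]
  unfold ballSize
  positivity

lemma sin_half_rpow_mul_cos_half_rpow_le (a : ℝ) {b θ r x : ℝ} (hb : 0 ≤ b) (hx : x ∈ Icc 0 π)
    (hxr : θ - r ≤ x) :
    sin (x / 2) ^ a * cos (x / 2) ^ b ≤ π ^ |a| * (π - θ + r) ^ b * x ^ a := by
  have hsin : IsComparable π (sin (x / 2)) x :=
    ⟨sin_half_nonneg hx, hx.1, by nlinarith [sin_half_le hx.1, pi_gt_three, hx.1],
      le_pi_mul_sin_half hx⟩
  have hcos : cos (x / 2) ≤ π - θ + r := by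
    have := sin_half_le (pi_sub_mem_Icc hx).1
    rw [sin_half_pi_sub] at this
    linarith [hx.2]
  have := hx.1
  calc sin (x / 2) ^ a * cos (x / 2) ^ b ≤ π ^ |a| * x ^ a * (π - θ + r) ^ b :=
        mul_le_mul (hsin.rpow_le (by linarith [pi_gt_three]) a)
          (rpow_le_rpow (cos_half_nonneg hx) hcos hb) (rpow_nonneg (cos_half_nonneg hx) b)
          (by positivity)
    _ = π ^ |a| * (π - θ + r) ^ b * x ^ a := by ring

lemma exists_muab_ballI_le {α β : ℝ} (hα₁ : -1 < α) (hα₂ : α ≤ -(1 / 2)) (hβ : -(1 / 2) ≤ β) :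
    ∃ C : ℝ, 0 < C ∧ ∀ θ ∈ Icc (0 : ℝ) π, ∀ r : ℝ, 0 < r →
      muab α β (ballI θ r) ≤ ENNReal.ofReal (C * ballSize α β θ r) := by
  have hα : 0 < 2 * α + 1 + 1 := by linarith
  refine ⟨π ^ |2 * α + 1| * 2 / (2 * α + 1 + 1), by positivity, fun θ hθ r hr => ?_⟩
  have hθr : 0 < θ + r := by linarith [hθ.1]
  have hθr' : 0 ≤ π - θ + r := by linarith [hθ.2]
  set m := max (θ - r) 0
  have hsub : ballI θ r ∩ Icc 0 π ⊆ Icc m (θ + r) := fun x hx =>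
    ⟨max_le hx.1.1.1.le hx.2.1, hx.1.1.2.le⟩
  rw [muab_apply _ _ (measurableSet_ballI _ _)]
  calc ∫⁻ x in ballI θ r ∩ Icc 0 π,
        ENNReal.ofReal (sin (x / 2) ^ (2 * α + 1) * cos (x / 2) ^ (2 * β + 1))
      ≤ ∫⁻ x in ballI θ r ∩ Icc 0 π,
        ENNReal.ofReal (π ^ |2 * α + 1| * (π - θ + r) ^ (2 * β + 1)) *
          ENNReal.ofReal (x ^ (2 * α + 1)) := by
        refine setLIntegral_mono' ((measurableSet_ballI _ _).inter measurableSet_Icc)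
          fun x hx => ?_
        rw [← ENNReal.ofReal_mul (by positivity)]
        exact ENNReal.ofReal_le_ofReal <|
          sin_half_rpow_mul_cos_half_rpow_le _ (by linarith) hx.2 hx.1.1.1.le
    _ ≤ ENNReal.ofReal (π ^ |2 * α + 1| * (π - θ + r) ^ (2 * β + 1)) *
          ENNReal.ofReal ((θ + r - m) * (θ + r) ^ (2 * α + 1) / (2 * α + 1 + 1)) := by
        rw [lintegral_const_mul' _ _ ENNReal.ofReal_ne_top]
        gcongr
        exact (lintegral_mono_set hsub).trans <| lintegral_Icc_rpow_le (by linarith)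
          (by linarith) (le_max_right _ _) (max_le (by linarith) hθr.le)
    _ ≤ ENNReal.ofReal (π ^ |2 * α + 1| * (π - θ + r) ^ (2 * β + 1)) *
          ENNReal.ofReal (2 * r * (θ + r) ^ (2 * α + 1) / (2 * α + 1 + 1)) := by
        gcongr
        linarith [le_max_left (θ - r) 0]
    _ = ENNReal.ofReal (π ^ |2 * α + 1| * 2 / (2 * α + 1 + 1) * ballSize α β θ r) := by
        rw [← ENNReal.ofReal_mul (by positivity), ballSize]
        ring_nf

lemma muab_ballI_pos (α β : ℝ) {θ φ : ℝ} (hθ : θ ∈ Icc 0 π) (hφ : φ ∈ Icc 0 π) (hne : θ ≠ φ) :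
    0 < muab α β (ballI θ |θ - φ|) := by
  have hIoo : ∀ x ∈ Ioo (min θ φ) (max θ φ), 0 < x ∧ x < π ∧ |x - θ| < |θ - φ| := by
    rintro x ⟨hx₁, hx₂⟩
    refine ⟨(le_min hθ.1 hφ.1).trans_lt hx₁, hx₂.trans_le (max_le hθ.2 hφ.2), ?_⟩
    grind
  have hsub : Ioo (min θ φ) (max θ φ) ⊆ ballI θ |θ - φ| ∩ Icc 0 π := fun x hx => by
    obtain ⟨hx₀, hxπ, hxr⟩ := hIoo x hx
    rw [abs_lt] at hxr
    exact ⟨⟨⟨by linarith, by linarith⟩, hx₀.le, hxπ.le⟩, hx₀.le, hxπ.le⟩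
  have hsupp : Ioo (min θ φ) (max θ φ) ⊆ Function.support (fun x : ℝ => ENNReal.ofReal
      (sin (x / 2) ^ (2 * α + 1) * cos (x / 2) ^ (2 * β + 1))) := fun x hx => by
    obtain ⟨hx₀, hxπ, -⟩ := hIoo x hx
    have := sin_pos_of_pos_of_lt_pi (show 0 < x / 2 by linarith) (by linarith)
    have := cos_pos_of_mem_Ioo (x := x / 2) ⟨by linarith, by linarith⟩
    exact (ENNReal.ofReal_pos.2 (by positivity)).ne'
  rw [muab_apply _ _ (measurableSet_ballI _ _)]
  refine lt_of_lt_of_le ?_ (lintegral_mono_set hsub)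
  rw [setLIntegral_pos_iff (by fun_prop), inter_eq_right.2 hsupp, Real.volume_Ioo,
    ENNReal.ofReal_pos, sub_pos]
  exact min_lt_max.2 hne

lemma ballSize_le {α β e θ r : ℝ} (hα : α ≤ -(1 / 2)) (hβ : -(1 / 2) ≤ β) (he : e ≤ 2 * α + 2)
    (hθ : θ ∈ Icc 0 π) (hr : r ∈ Ioc 0 π) :
    ballSize α β θ r ≤ π ^ (2 * α + 2 - e) * (2 * π) ^ (2 * β + 1) * r ^ e := by
  obtain ⟨hr₀, hrπ⟩ := hr
  have hsplit : r * r ^ (2 * α + 1) = r ^ (2 * α + 2 - e) * r ^ e := by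
    rw [← rpow_add hr₀, mul_comm, ← rpow_add_one hr₀.ne']
    ring_nf
  have hnear : (θ + r) ^ (2 * α + 1) ≤ r ^ (2 * α + 1) :=
    rpow_le_rpow_of_nonpos hr₀ (by linarith [hθ.1]) (by linarith)
  have hfar : (π - θ + r) ^ (2 * β + 1) ≤ (2 * π) ^ (2 * β + 1) :=
    rpow_le_rpow (by linarith [hθ.2]) (by linarith [hθ.1]) (by linarith)
  calc ballSize α β θ r ≤ r * r ^ (2 * α + 1) * (2 * π) ^ (2 * β + 1) := by
        have := hθ.2
        unfold ballSize
        gcongr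
    _ = r ^ (2 * α + 2 - e) * r ^ e * (2 * π) ^ (2 * β + 1) := by rw [hsplit]
    _ ≤ π ^ (2 * α + 2 - e) * r ^ e * (2 * π) ^ (2 * β + 1) := by gcongr
    _ = π ^ (2 * α + 2 - e) * (2 * π) ^ (2 * β + 1) * r ^ e := by ring

lemma exists_inv_ballSize_le {α β : ℝ} (hα₁ : -1 < α) (hα₂ : α ≤ -(1 / 2)) (hβ : -(1 / 2) ≤ β) :
    ∃ C : ℝ, 0 < C ∧ ∀ θ ∈ Icc (0 : ℝ) π, ∀ φ ∈ Icc (0 : ℝ) π, θ ≠ φ →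
      (ballSize α β θ |θ - φ|)⁻¹ ≤ C * ((muab α β (ballI θ |θ - φ|)).toReal)⁻¹ := by
  obtain ⟨C, hC, hle⟩ := exists_muab_ballI_le hα₁ hα₂ hβ
  refine ⟨C, hC, fun θ hθ φ hφ hne => ?_⟩
  have hr : 0 < |θ - φ| := abs_pos.2 (sub_ne_zero.2 hne)
  have hball := ballSize_pos α β hθ hr
  have hle := hle θ hθ _ hr
  have hpos : 0 < (muab α β (ballI θ |θ - φ|)).toReal :=
    ENNReal.toReal_pos (muab_ballI_pos α β hθ hφ hne).ne' (hle.trans_lt ENNReal.ofReal_lt_top).ne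
  rw [← div_eq_mul_inv, le_div_iff₀ hpos, inv_mul_le_iff₀ hball, mul_comm]
  exact ENNReal.toReal_le_of_le_ofReal (by positivity) hle

/-! ### The weighted norm in `t` -/

/-- The measure `t ^ (W - 1) dt` on `(0, 1)`. -/
noncomputable def unitPowerMeasure (W : ℝ) : Measure ℝ :=
  (volume.restrict (Ioo (0 : ℝ) 1)).withDensity fun t => ENNReal.ofReal (t ^ (W - 1))

lemma ae_mem_Ioo_unitPowerMeasure (W : ℝ) : ∀ᵐ t ∂unitPowerMeasure W, t ∈ Ioo (0 : ℝ) 1 :=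
  (withDensity_absolutelyContinuous _ _).ae_le (ae_restrict_mem measurableSet_Ioo)

lemma eLpNorm_top_add_rpow_le {γ r : ℝ} (hγ : 0 ≤ γ) (hr : 0 < r) (W : ℝ) :
    eLpNorm (fun t : ℝ => (t + r) ^ (-γ)) ∞ (unitPowerMeasure W) ≤ ENNReal.ofReal (r ^ (-γ)) := by
  rw [eLpNorm_exponent_top]
  refine eLpNormEssSup_le_of_ae_enorm_bound ?_
  filter_upwards [ae_mem_Ioo_unitPowerMeasure W] with t ht
  have := ht.1
  rw [Real.enorm_of_nonneg (by positivity)]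
  exact ENNReal.ofReal_le_ofReal (rpow_le_rpow_of_nonpos hr (by linarith) (by linarith))

lemma lintegral_unitPowerMeasure_le {W γ q r : ℝ} (hW : 0 < W) (hγ : 0 < γ) (hq : 0 < q)
    (hr : 0 < r) :
    ∫⁻ t, ‖(t + r) ^ (-(W / q + γ))‖ₑ ^ q ∂unitPowerMeasure W ≤
      ENNReal.ofReal ((1 / W + 1 / (γ * q)) * r ^ (-(γ * q))) := by
  rw [unitPowerMeasure, lintegral_withDensity_eq_lintegral_mul _ (by fun_prop) (by fun_prop)]
  refine le_trans ?_ (lintegral_Ioi_zero_add_rpow_mul_rpow_le hW (mul_pos hγ hq) hr)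
  refine (setLIntegral_mono' measurableSet_Ioo fun t ht => ?_).trans
    (lintegral_mono_set Ioo_subset_Ioi_self)
  have ht₀ := ht.1
  have hexp : -(W / q + γ) * q = -(W + γ * q) := by field_simp
  rw [Pi.mul_apply, Real.enorm_of_nonneg (by positivity),
    ENNReal.ofReal_rpow_of_nonneg (by positivity) hq.le, ← rpow_mul (by positivity), hexp,
    mul_comm, ← ENNReal.ofReal_mul (by positivity), add_comm t r]

lemma exists_eLpNorm_add_rpow_le {W γ : ℝ} (hW : 0 < W) (hγ : 0 < γ) {p : ℝ≥0∞} (hp : p ≠ 0) :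
    ∃ C : ℝ, 0 < C ∧ ∀ r : ℝ, 0 < r →
      eLpNorm (fun t : ℝ => (t + r) ^ (-(W / p.toReal + γ))) p (unitPowerMeasure W) ≤
        ENNReal.ofReal (C * r ^ (-γ)) := by
  rcases eq_or_ne p ∞ with rfl | hp'
  · refine ⟨1, one_pos, fun r hr => ?_⟩
    simpa only [ENNReal.toReal_top, div_zero, zero_add, one_mul] using
      eLpNorm_top_add_rpow_le hγ.le hr W
  · have hq : 0 < p.toReal := ENNReal.toReal_pos hp hp'
    refine ⟨(1 / W + 1 / (γ * p.toReal)) ^ (1 / p.toReal), by positivity, fun r hr => ?_⟩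
    calc eLpNorm (fun t : ℝ => (t + r) ^ (-(W / p.toReal + γ))) p (unitPowerMeasure W)
        ≤ ENNReal.ofReal ((1 / W + 1 / (γ * p.toReal)) * r ^ (-(γ * p.toReal))) ^
            (1 / p.toReal) := by
          rw [eLpNorm_eq_lintegral_rpow_enorm_toReal hp hp']
          gcongr
          exact lintegral_unitPowerMeasure_le hW hγ hq hr
      _ = ENNReal.ofReal ((1 / W + 1 / (γ * p.toReal)) ^ (1 / p.toReal) * r ^ (-γ)) := by
          rw [ENNReal.ofReal_rpow_of_nonneg (by positivity) (by positivity),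
            mul_rpow (by positivity) (by positivity), ← rpow_mul hr.le, neg_mul, mul_assoc,
            mul_one_div_cancel hq.ne', mul_one]

/-! ### Bounds for `Υ` -/

lemma enorm_integral_integral_le {X Y E : Type*} [MeasurableSpace X] [MeasurableSpace Y]
    [NormedAddCommGroup E] [NormedSpace ℝ E] {μ : Measure X} {ν : Measure Y} {f : X → Y → E}
    {F : X → ℝ≥0∞} {G : Y → ℝ≥0∞} (hF : AEMeasurable F μ) (hG : AEMeasurable G ν)
    (hf : ∀ᵐ y ∂ν, ∀ᵐ x ∂μ, ‖f x y‖ₑ ≤ G y * F x) :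
    ‖∫ y, (∫ x, f x y ∂μ) ∂ν‖ₑ ≤ (∫⁻ y, G y ∂ν) * ∫⁻ x, F x ∂μ :=
  calc ‖∫ y, (∫ x, f x y ∂μ) ∂ν‖ₑ ≤ ∫⁻ y, ∫⁻ x, ‖f x y‖ₑ ∂μ ∂ν :=
        (enorm_integral_le_lintegral_enorm _).trans <|
          lintegral_mono fun _ => enorm_integral_le_lintegral_enorm _
    _ ≤ ∫⁻ y, ∫⁻ x, G y * F x ∂μ ∂ν :=
        lintegral_mono_ae (hf.mono fun _ hy => lintegral_mono_ae hy)
    _ = (∫⁻ y, G y ∂ν) * ∫⁻ x, F x ∂μ := lintegral_lintegral_mul hG hF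

/-- The function `Υ` of the paper, with the exponent `n` left free. -/
noncomputable def upsilon (α β : ℝ) (K k : ℕ) (n t θ φ : ℝ) : ℝ :=
  (sin (θ / 2) + sin (φ / 2)) ^ (K * k) *
    ∫ v, (∫ u, (t ^ 2 + qf θ φ u v) ^ (-n) ∂piAux α K) ∂PiMeas β

section Upsilon

variable {α β δ w s t θ φ : ℝ} {K k : ℕ}

lemma sq_add_qf_rpow_le {a b d e u v : ℝ} (ha : 0 ≤ a) (hb : 0 ≤ b) (hd : 0 ≤ d) (he : 0 ≤ e)
    (hθ : θ ∈ Icc 0 π) (hφ : φ ∈ Icc 0 π) (hne : θ ≠ φ) (hu : u ≤ 1) (hv : v ≤ 1) :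
    (t ^ 2 + qf θ φ u v) ^ (-(d + e + a + b)) ≤
      (t ^ 2 + gap θ φ) ^ (-d) * gap θ φ ^ (-e) *
        ((gap θ φ + (1 - u) * (sin (θ / 2) * sin (φ / 2))) ^ (-a) *
          (gap θ φ + (1 - v) * (cos (θ / 2) * cos (φ / 2))) ^ (-b)) := by
  have hgap := gap_pos hne
  have hsin : 0 ≤ (1 - u) * (sin (θ / 2) * sin (φ / 2)) :=
    mul_nonneg (sub_nonneg.2 hu) (mul_nonneg (sin_half_nonneg hθ) (sin_half_nonneg hφ))
  have hcos : 0 ≤ (1 - v) * (cos (θ / 2) * cos (φ / 2)) :=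
    mul_nonneg (sub_nonneg.2 hv) (mul_nonneg (cos_half_nonneg hθ) (cos_half_nonneg hφ))
  have hqf := le_qf hθ hφ u v
  have ht := sq_nonneg t
  have hpos : 0 < t ^ 2 + qf θ φ u v := by linarith
  have hle {x e : ℝ} (hx : 0 < x) (hxq : x ≤ t ^ 2 + qf θ φ u v) (he : 0 ≤ e) :
      (t ^ 2 + qf θ φ u v) ^ (-e) ≤ x ^ (-e) :=
    rpow_le_rpow_of_nonpos hx hxq (neg_nonpos.2 he)
  rw [show -(d + e + a + b) = -d + -e + (-a + -b) by ring, rpow_add hpos, rpow_add hpos,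
    rpow_add hpos]
  gcongr ?_ * ?_ * (?_ * ?_)
  · exact hle (by linarith) (by linarith) hd
  · exact hle hgap (by linarith) he
  · exact hle (by linarith) (by linarith) ha
  · exact hle (by linarith) (by linarith) hb

lemma enorm_upsilon_le {a b d e : ℝ} (ha : 0 ≤ a) (hb : 0 ≤ b) (hd : 0 ≤ d) (he : 0 ≤ e)
    (hθ : θ ∈ Icc 0 π) (hφ : φ ∈ Icc 0 π) (hne : θ ≠ φ) :
    ‖upsilon α β K k (d + e + a + b) t θ φ‖ₑ ≤
      ENNReal.ofReal ((t ^ 2 + gap θ φ) ^ (-d) * gap θ φ ^ (-e)) *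
        (ENNReal.ofReal ((sin (θ / 2) + sin (φ / 2)) ^ (K * k)) *
          ∫⁻ u, ENNReal.ofReal
            ((gap θ φ + (1 - u) * (sin (θ / 2) * sin (φ / 2))) ^ (-a)) ∂piAux α K) *
        ∫⁻ v, ENNReal.ofReal
          ((gap θ φ + (1 - v) * (cos (θ / 2) * cos (φ / 2))) ^ (-b)) ∂PiMeas β := by
  have hgap := gap_pos hne
  have hsum := add_nonneg (sin_half_nonneg hθ) (sin_half_nonneg hφ)
  have hsin := mul_nonneg (sin_half_nonneg hθ) (sin_half_nonneg hφ)
  have hcos := mul_nonneg (cos_half_nonneg hθ) (cos_half_nonneg hφ)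
  set A := (t ^ 2 + gap θ φ) ^ (-d) * gap θ φ ^ (-e)
  have hint : ‖∫ v, (∫ u, (t ^ 2 + qf θ φ u v) ^ (-(d + e + a + b)) ∂piAux α K) ∂PiMeas β‖ₑ ≤
      (∫⁻ v, ENNReal.ofReal A * ENNReal.ofReal
        ((gap θ φ + (1 - v) * (cos (θ / 2) * cos (φ / 2))) ^ (-b)) ∂PiMeas β) *
      ∫⁻ u, ENNReal.ofReal
        ((gap θ φ + (1 - u) * (sin (θ / 2) * sin (φ / 2))) ^ (-a)) ∂piAux α K := by
    refine enorm_integral_integral_le (by fun_prop) (by fun_prop) ?_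
    filter_upwards [ae_mem_Icc_PiMeas β] with v ⟨_, hv⟩
    filter_upwards [ae_mem_Icc_piAux α K] with u ⟨_, hu⟩
    have hu₀ := mul_nonneg (sub_nonneg.2 hu) hsin
    have hv₀ := mul_nonneg (sub_nonneg.2 hv) hcos
    have hqf : 0 ≤ t ^ 2 + qf θ φ u v := by linarith [le_qf hθ hφ u v, sq_nonneg t]
    rw [Real.enorm_of_nonneg (rpow_nonneg hqf _), ← ENNReal.ofReal_mul (by positivity),
      ← ENNReal.ofReal_mul (by positivity), mul_assoc, mul_comm (_ ^ (-b))]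
    exact ENNReal.ofReal_le_ofReal (sq_add_qf_rpow_le ha hb hd he hθ hφ hne hu hv)
  rw [lintegral_const_mul' _ _ ENNReal.ofReal_ne_top] at hint
  rw [upsilon, enorm_mul, Real.enorm_of_nonneg (pow_nonneg hsum _)]
  exact (mul_le_mul_right hint _).trans_eq (by ring)

lemma exists_mul_gap_rpow_le (α β δ w s : ℝ) :
    ∃ C : ℝ, 0 < C ∧ ∀ θ ∈ Icc (0 : ℝ) π, ∀ φ ∈ Icc (0 : ℝ) π, θ ≠ φ → ∀ t : ℝ, 0 ≤ t →
      (t ^ 2 + gap θ φ) ^ (-((w + δ) / 2)) * gap θ φ ^ (-(s / 2)) *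
          (gap θ φ ^ (-(1 / 2 - δ)) *
            (gap θ φ + sin (θ / 2) * sin (φ / 2)) ^ (-(α + 1 / 2))) *
          (gap θ φ ^ (-(δ / 2)) *
            (gap θ φ + cos (θ / 2) * cos (φ / 2)) ^ (-(β + 1 / 2))) ≤
        C * (|θ - φ| ^ (δ - s) / ballSize α β θ |θ - φ| * (t + |θ - φ|) ^ (-(w + δ))) := by
  set c := 10 * π ^ 2
  have hc : 1 ≤ c := by linarith [nine_le_pi_sq]
  refine ⟨c ^ |-((w + δ) / 2)| * c ^ |-((s + 1 - δ) / 2)| * c ^ |-(α + 1 / 2)| *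
    c ^ |-(β + 1 / 2)|, by positivity, fun θ hθ φ hφ hne t ht => ?_⟩
  have hgap := gap_pos hne
  have hr : 0 < |θ - φ| := abs_pos.2 (sub_ne_zero.2 hne)
  have hnear : 0 < θ + |θ - φ| := by linarith [hθ.1]
  have hfar : 0 < π - θ + |θ - φ| := by linarith [hθ.2]
  have hsin := (isComparable_gap_add_sin_mul_sin hθ hφ).nonneg_left
  calc _ = (t ^ 2 + gap θ φ) ^ (-((w + δ) / 2)) * gap θ φ ^ (-((s + 1 - δ) / 2)) *
          (gap θ φ + sin (θ / 2) * sin (φ / 2)) ^ (-(α + 1 / 2)) *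
          (gap θ φ + cos (θ / 2) * cos (φ / 2)) ^ (-(β + 1 / 2)) := by
        rw [show -((s + 1 - δ) / 2) = -(s / 2) + -(1 / 2 - δ) + -(δ / 2) by ring,
          rpow_add hgap, rpow_add hgap]
        ring
    _ ≤ (c ^ |-((w + δ) / 2)| * (t + |θ - φ|) ^ (2 * -((w + δ) / 2))) *
          (c ^ |-((s + 1 - δ) / 2)| * |θ - φ| ^ (2 * -((s + 1 - δ) / 2))) *
          (c ^ |-(α + 1 / 2)| * (θ + |θ - φ|) ^ (2 * -(α + 1 / 2))) *
          (c ^ |-(β + 1 / 2)| * (π - θ + |θ - φ|) ^ (2 * -(β + 1 / 2))) := by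
        have hcos := (isComparable_gap_add_cos_mul_cos hθ hφ).nonneg_left
        gcongr
        · exact (isComparable_sq_add_gap ht θ φ).rpow_le_of_sq hc (by positivity) _
        · exact (isComparable_gap θ φ).rpow_le_of_sq hc hr.le _
        · exact (isComparable_gap_add_sin_mul_sin hθ hφ).rpow_le_of_sq hc hnear.le _
        · exact (isComparable_gap_add_cos_mul_cos hθ hφ).rpow_le_of_sq hc hfar.le _
    _ = _ := by
        rw [show 2 * -((w + δ) / 2) = -(w + δ) by ring,
          show 2 * -((s + 1 - δ) / 2) = δ - s - 1 by ring,
          show 2 * -(α + 1 / 2) = -(2 * α + 1) by ring,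
          show 2 * -(β + 1 / 2) = -(2 * β + 1) by ring, rpow_sub_one hr.ne',
          rpow_neg hnear.le, rpow_neg hfar.le, ballSize]
        field_simp

lemma sin_half_add_sin_half_le (hθ : θ ∈ Icc 0 π) (hφ : φ ∈ Icc 0 π) :
    sin (θ / 2) + sin (φ / 2) ≤ θ + |θ - φ| := by
  linarith [sin_half_le hθ.1, sin_half_le hφ.1, neg_abs_le (θ - φ), abs_nonneg (θ - φ)]

lemma exists_enorm_upsilon_le (hα : α ≤ -(1 / 2)) (hβ : -(1 / 2) ≤ β) (hδ : 0 < δ)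
    (hδα : δ < α + 1) (hw : 0 ≤ w) (hs : 0 ≤ s) (hK : K ≤ 1) (hk : k ≤ 2) :
    ∃ C : ℝ, 0 < C ∧ ∀ θ ∈ Icc (0 : ℝ) π, ∀ φ ∈ Icc (0 : ℝ) π, θ ≠ φ → ∀ t : ℝ, 0 ≤ t →
      ‖upsilon α β K k (α + β + 3 / 2 + w / 2 + (K * k : ℕ) / 2 + s / 2) t θ φ‖ₑ ≤
        ENNReal.ofReal
          (C * (|θ - φ| ^ (δ - s) / ballSize α β θ |θ - φ| * (t + |θ - φ|) ^ (-(w + δ)))) := by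
  have hc : 2 ≤ 10 * π ^ 2 := by linarith [nine_le_pi_sq]
  obtain ⟨C₁, hC₁, hu⟩ := exists_pow_mul_lintegral_piAux_le hα hδ hδα hc hK hk
  obtain ⟨C₂, hC₂, hv⟩ := exists_lintegral_PiMeas_rpow_le hβ (half_pos hδ)
  obtain ⟨C₃, hC₃, hgap⟩ := exists_mul_gap_rpow_le α β δ w s
  refine ⟨C₁ * C₂ * C₃, by positivity, fun θ hθ φ hφ hne t ht => ?_⟩
  have hgap₀ := gap_pos hne
  have hsin := mul_nonneg (sin_half_nonneg hθ) (sin_half_nonneg hφ)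
  have hcos := mul_nonneg (cos_half_nonneg hθ) (cos_half_nonneg hφ)
  have hsum := add_nonneg (sin_half_nonneg hθ) (sin_half_nonneg hφ)
  have hsum_sq : (sin (θ / 2) + sin (φ / 2)) ^ 2 ≤
      10 * π ^ 2 * (gap θ φ + sin (θ / 2) * sin (φ / 2)) :=
    (pow_le_pow_left₀ hsum (sin_half_add_sin_half_le hθ hφ) 2).trans
      (isComparable_gap_add_sin_mul_sin hθ hφ).right_le
  have hKk : (0 : ℝ) ≤ (K * k : ℕ) / 2 := by positivity
  rw [show α + β + 3 / 2 + w / 2 + ((K * k : ℕ) : ℝ) / 2 + s / 2 = (w + δ) / 2 + s / 2 +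
    (α + 1 - δ + (K * k : ℕ) / 2) + (β + 1 / 2 + δ / 2) by ring]
  calc _ ≤ _ := enorm_upsilon_le (by linarith) (by linarith) (by linarith) (by linarith) hθ hφ hne
    _ ≤ ENNReal.ofReal ((t ^ 2 + gap θ φ) ^ (-((w + δ) / 2)) * gap θ φ ^ (-(s / 2))) *
          ENNReal.ofReal (C₁ * (gap θ φ ^ (-(1 / 2 - δ)) *
            (gap θ φ + sin (θ / 2) * sin (φ / 2)) ^ (-(α + 1 / 2)))) *
          ENNReal.ofReal (C₂ * (gap θ φ ^ (-(δ / 2)) *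
            (gap θ φ + cos (θ / 2) * cos (φ / 2)) ^ (-(β + 1 / 2)))) := by
        gcongr
        · exact hu _ _ _ hsum hgap₀ hsin hsum_sq
        · exact hv _ _ hgap₀ hcos
    _ ≤ _ := by
        rw [← ENNReal.ofReal_mul (by positivity), ← ENNReal.ofReal_mul (by positivity)]
        refine ENNReal.ofReal_le_ofReal ?_
        rw [mul_assoc (C₁ * C₂)]
        refine le_trans (le_of_eq ?_)
          (mul_le_mul_of_nonneg_left (hgap θ hθ φ hφ hne t ht) (by positivity))
        ring

lemma exists_one_le_mul_rpow_div_ballSize (hα : α ≤ -(1 / 2)) (hβ : -(1 / 2) ≤ β) (hδ : 0 ≤ δ)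
    (hδα : δ ≤ 2 * α + 2) (hw : 0 ≤ w) (hs : 0 ≤ s) :
    ∃ C : ℝ, 0 < C ∧ ∀ θ ∈ Icc (0 : ℝ) π, ∀ r ∈ Ioc (0 : ℝ) π, ∀ t ∈ Ioo (0 : ℝ) 1,
      1 ≤ C * (r ^ (δ - s) / ballSize α β θ r * (t + r) ^ (-(w + δ))) := by
  refine ⟨π ^ (2 * α + 2 - (δ - s)) * (2 * π) ^ (2 * β + 1) * (1 + π) ^ (w + δ),
    by positivity, fun θ hθ r hr t ht => ?_⟩
  have hr₀ := hr.1
  have htr : 0 < t + r := by linarith [ht.1]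
  have hball := ballSize_pos α β hθ hr₀
  have hball_le := ballSize_le hα hβ (show δ - s ≤ 2 * α + 2 by linarith) hθ hr
  have htr_le : (t + r) ^ (w + δ) ≤ (1 + π) ^ (w + δ) :=
    rpow_le_rpow htr.le (by linarith [ht.2, hr.2]) (by linarith)
  rw [rpow_neg htr.le, ← div_eq_mul_inv, div_div, mul_div_assoc', one_le_div (by positivity)]
  calc ballSize α β θ r * (t + r) ^ (w + δ)
      ≤ π ^ (2 * α + 2 - (δ - s)) * (2 * π) ^ (2 * β + 1) * r ^ (δ - s) * (1 + π) ^ (w + δ) := by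
        gcongr
    _ = _ := by ring

lemma exists_enorm_one_add_upsilon_le (hα : α ≤ -(1 / 2)) (hβ : -(1 / 2) ≤ β) (hδ : 0 < δ)
    (hδα : δ < α + 1) (hw : 0 ≤ w) (hs : 0 ≤ s) (hK : K ≤ 1) (hk : k ≤ 2) :
    ∃ C : ℝ, 0 < C ∧ ∀ θ ∈ Icc (0 : ℝ) π, ∀ φ ∈ Icc (0 : ℝ) π, θ ≠ φ → ∀ t ∈ Ioo (0 : ℝ) 1,
      ‖1 + upsilon α β K k (α + β + 3 / 2 + w / 2 + (K * k : ℕ) / 2 + s / 2) t θ φ‖ₑ ≤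
        ENNReal.ofReal
          (C * (|θ - φ| ^ (δ - s) / ballSize α β θ |θ - φ| * (t + |θ - φ|) ^ (-(w + δ)))) := by
  obtain ⟨C₁, hC₁, hone⟩ := exists_one_le_mul_rpow_div_ballSize hα hβ hδ.le (by linarith) hw hs
  obtain ⟨C₂, hC₂, hups⟩ := exists_enorm_upsilon_le hα hβ hδ hδα hw hs hK hk
  refine ⟨C₁ + C₂, by positivity, fun θ hθ φ hφ hne t ht => ?_⟩
  have hr : 0 < |θ - φ| := abs_pos.2 (sub_ne_zero.2 hne)
  have hball := ballSize_pos α β hθ hr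
  have ht₀ := ht.1
  rw [add_mul, ENNReal.ofReal_add (by positivity) (by positivity)]
  refine (enorm_add_le _ _).trans (add_le_add ?_ (hups θ hθ φ hφ hne t ht₀.le))
  rw [Real.enorm_of_nonneg zero_le_one]
  exact ENNReal.ofReal_le_ofReal (hone θ hθ _ ⟨hr, abs_sub_le_pi hθ hφ⟩ t ht)

lemma exists_eLpNorm_one_add_upsilon_le (hα₁ : -1 < α) (hα₂ : α ≤ -(1 / 2)) (hβ : -(1 / 2) ≤ β)
    (hK : K ≤ 1) (hk : k ≤ 2) {W : ℝ} (hW : 0 < W) (hs : 0 ≤ s) {p : ℝ≥0∞} (hp : p ≠ 0) :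
    ∃ C : ℝ, 0 < C ∧ ∀ θ ∈ Icc (0 : ℝ) π, ∀ φ ∈ Icc (0 : ℝ) π, θ ≠ φ →
      eLpNorm (fun t => 1 + upsilon α β K k
          (α + β + 3 / 2 + W / p.toReal / 2 + (K * k : ℕ) / 2 + s / 2) t θ φ) p
        (unitPowerMeasure W) ≤
      ENNReal.ofReal (C * |θ - φ| ^ (-s) / ballSize α β θ |θ - φ|) := by
  obtain ⟨δ, hδ, hδα⟩ := exists_between (show (0 : ℝ) < α + 1 by linarith)
  obtain ⟨C₁, hC₁, hpt⟩ := exists_enorm_one_add_upsilon_le hα₂ hβ hδ hδα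
    (show 0 ≤ W / p.toReal by positivity) hs hK hk
  obtain ⟨C₂, hC₂, hnorm⟩ := exists_eLpNorm_add_rpow_le hW hδ hp
  refine ⟨C₁ * C₂, by positivity, fun θ hθ φ hφ hne => ?_⟩
  have hr : 0 < |θ - φ| := abs_pos.2 (sub_ne_zero.2 hne)
  have hball := ballSize_pos α β hθ hr
  set M := C₁ * (|θ - φ| ^ (δ - s) / ballSize α β θ |θ - φ|) with hM
  have hM₀ : 0 ≤ M := by positivity
  calc _ ≤ eLpNorm (M • fun t : ℝ => (t + |θ - φ|) ^ (-(W / p.toReal + δ))) p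
          (unitPowerMeasure W) := by
        refine eLpNorm_mono_enorm_ae ?_
        filter_upwards [ae_mem_Ioo_unitPowerMeasure W] with t ht
        have := ht.1
        rw [Pi.smul_apply, smul_eq_mul,
          Real.enorm_of_nonneg (r := M * (t + |θ - φ|) ^ (-(W / p.toReal + δ))) (by positivity),
          hM, mul_assoc C₁]
        exact hpt θ hθ φ hφ hne t ht
    _ ≤ ENNReal.ofReal M * ENNReal.ofReal (C₂ * |θ - φ| ^ (-δ)) := by
        rw [eLpNorm_const_smul, Real.enorm_of_nonneg hM₀]
        gcongr
        exact hnorm _ hr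
    _ = ENNReal.ofReal (C₁ * C₂ * |θ - φ| ^ (-s) / ballSize α β θ |θ - φ|) := by
        rw [← ENNReal.ofReal_mul hM₀, show -s = δ - s + -δ by ring, rpow_add hr, hM]
        ring_nf

end Upsilon

theorem finbridge_low_alpha_general (α β : ℝ) (hα₁ : -1 < α) (hα₂ : α ≤ -(1 / 2))
    (hβ : -(1 / 2) ≤ β) (K k : ℕ) (hK : K ≤ 1) (hk : k ≤ 2) (W s : ℝ) (hW : 0 < W) (hs : 0 ≤ s)
    (p : ℝ≥0∞) (hp : p ≠ 0) :
    ∃ C : ℝ, 0 < C ∧ ∀ θ ∈ Icc (0 : ℝ) π, ∀ φ ∈ Icc (0 : ℝ) π, θ ≠ φ →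
      eLpNorm (fun t => 1 + upsilon α β K k
          (α + β + 3 / 2 + W / (2 * p.toReal) + (K * k : ℕ) / 2 + s / 2) t θ φ) p
        (unitPowerMeasure W) ≤
      ENNReal.ofReal (C * |θ - φ| ^ (-s) / (muab α β (ballI θ |θ - φ|)).toReal) := by
  obtain ⟨C₁, hC₁, hnorm⟩ := exists_eLpNorm_one_add_upsilon_le hα₁ hα₂ hβ hK hk hW hs hp
  obtain ⟨C₂, hC₂, hball⟩ := exists_inv_ballSize_le hα₁ hα₂ hβ
  refine ⟨C₁ * C₂, by positivity, fun θ hθ φ hφ hne => ?_⟩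
  rw [show W / (2 * p.toReal) = W / p.toReal / 2 by rw [div_div, mul_comm]]
  refine (hnorm θ hθ φ hφ hne).trans (ENNReal.ofReal_le_ofReal ?_)
  calc C₁ * |θ - φ| ^ (-s) / ballSize α β θ |θ - φ|
      ≤ C₁ * |θ - φ| ^ (-s) * (C₂ * ((muab α β (ballI θ |θ - φ|)).toReal)⁻¹) := by
        rw [div_eq_mul_inv]
        gcongr
        exact hball θ hθ φ hφ hne
    _ = C₁ * C₂ * |θ - φ| ^ (-s) / (muab α β (ballI θ |θ - φ|)).toReal := by ring

theorem finbridge_low_alpha (α β : ℝ) (hα₁ : -1 < α) (hα₂ : α < -(1/2)) (hβ : -(1/2) ≤ β)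
    (K k : ℕ) (hK : K ≤ 1) (hk : k ≤ 2)
    (W s : ℝ) (hW : 1 ≤ W) (hs : 0 ≤ s) (p : ℝ≥0∞) (hp : 1 ≤ p) :
    ∃ C : ℝ, 0 < C ∧ ∀ θ ∈ Icc (0 : ℝ) π, ∀ φ ∈ Icc (0 : ℝ) π, θ ≠ φ →
      eLpNorm (fun t : ℝ =>
          1 + (Real.sin (θ/2) + Real.sin (φ/2)) ^ (K * k) *
            ∫ v, (∫ u,
                (t ^ 2 + qf θ φ u v) ^
                  (-(α + β + 3/2 + W / (2 * p.toReal) + (K * k : ℕ) / 2 + s / 2))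
              ∂(piAux α K)) ∂(PiMeas β)) p
          ((volume.restrict (Ioo (0 : ℝ) 1)).withDensity
            (fun t => ENNReal.ofReal (t ^ (W - 1))))
        ≤ ENNReal.ofReal
            (C * |θ - φ| ^ (-s) / (muab α β (ballI θ |θ - φ|)).toReal) := by
  exact finbridge_low_alpha_general α β hα₁ hα₂.le hβ K k hK hk W s (one_pos.trans_le hW) hs p
    (one_pos.trans_le hp).ne'
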